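/- There is an absolute constant C such that: for every integer N ≥ 2, every real α, and all integers a, q with q ≥ 1, gcd(a,q) = 1 and |α − a/q| ≤ 1/q², one has |S₁(N,α)| ≤ C · N (log N)⁴ (q^{−1/2} + N^{−1/5} + q^{1/2} N^{−1/2}). -/

import Mathlib

/-- `e(x) = exp(2πix)`. -/
noncomputable def eexp (x : ℝ) : ℂ := Complex.exp (2 * Real.pi * Complex.I * x)

/-- `S₁(N,α) = Σ_{p ≤ N, p prime} e(αp)`. -/
noncomputable def S₁ (N : ℕ) (α : ℝ) : ℂ :=
  ∑ p ∈ (Finset.range (N + 1)).filter (fun p => Nat.Prime p), eexp (α * (p : ℝ))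

/-!
By partial summation it suffices to bound `∑ Λ(n) e(αn)` over `n ≤ N`. Vaughan's identity with the
parameter `U = N ^ (2 / 5)` splits it into sums over pairs `(u, m)` with `um ≤ N` of two shapes. In
the type I sums `u ≤ U²` and the weight of `m` is smooth, so that the sum over `m` is a geometric
sum of size `min (N / u, 1 / ‖αu‖)`. In the type II sums both variables exceed `U` and the weights
are arbitrary; there one localizes `u` to a dyadic block and applies Cauchy-Schwarz, after which the
correlations `∑ e(αu(n - n'))` over `u` are again geometric. In both cases `|α - a/q| ≤ 1/q²` makes
the points `αk` with `k` in a block of length about `q / 2` well spaced modulo one, so the sums of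
`min (X, 1 / ‖αk + β‖)` are as small as those of a harmonic series.
-/

namespace MinorArc

open Finset

lemma norm_eexp (x : ℝ) : ‖eexp x‖ = 1 := by
  rw [eexp, show (2 * Real.pi * Complex.I * x : ℂ) = (2 * Real.pi * x : ℝ) * Complex.I by
    push_cast; ring, Complex.norm_exp_ofReal_mul_I]

lemma eexp_add (x y : ℝ) : eexp (x + y) = eexp x * eexp y := by
  rw [eexp, eexp, eexp, ← Complex.exp_add, Complex.ofReal_add, mul_add]

lemma eexp_intCast (m : ℤ) : eexp m = 1 :=
  Complex.exp_eq_one_iff.2 ⟨m, by push_cast; ring⟩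

lemma conj_eexp (x : ℝ) : starRingEnd ℂ (eexp x) = eexp (-x) := by
  rw [eexp, eexp, ← Complex.exp_conj]
  simp [Complex.conj_ofNat]

lemma eexp_sub_round (θ : ℝ) : eexp (θ - round θ) = eexp θ := by
  have h := eexp_add (θ - round θ) (round θ)
  rwa [sub_add_cancel, eexp_intCast, mul_one, eq_comm] at h

lemma norm_eexp_sub_one (θ : ℝ) : ‖eexp θ - 1‖ = 2 * |Real.sin (Real.pi * θ)| := by
  rw [eexp, show (2 * Real.pi * Complex.I * θ : ℂ) = Complex.I * (2 * Real.pi * θ : ℝ) by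
    push_cast; ring, Complex.norm_exp_I_mul_ofReal_sub_one, norm_mul, Real.norm_eq_abs,
    Real.norm_eq_abs, abs_two, mul_assoc, mul_div_cancel_left₀ _ two_ne_zero]

lemma four_mul_norm_le_norm_eexp_sub_one (θ : ℝ) :
    4 * ‖(θ : UnitAddCircle)‖ ≤ ‖eexp θ - 1‖ := by
  have hround := abs_sub_round θ
  have hsin : 2 / Real.pi * |Real.pi * (θ - round θ)| ≤ |Real.sin (Real.pi * (θ - round θ))| := by
    refine Real.mul_abs_le_abs_sin ?_
    rw [abs_mul, abs_of_pos Real.pi_pos]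
    nlinarith [Real.pi_pos]
  rw [abs_mul, abs_of_pos Real.pi_pos, ← mul_assoc, div_mul_cancel₀ _ Real.pi_ne_zero] at hsin
  rw [← eexp_sub_round, norm_eexp_sub_one, UnitAddCircle.norm_eq]
  linarith

lemma eexp_sub_one_mul_sum_Ico (θ : ℝ) {a b : ℕ} (hab : a ≤ b) :
    (eexp θ - 1) * ∑ u ∈ Ico a b, eexp (θ * u) = eexp (θ * b) - eexp (θ * a) := by
  rw [← sum_Ico_sub (fun n : ℕ => eexp (θ * n)) hab, mul_sum]
  refine sum_congr rfl fun u _ => ?_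
  rw [Nat.cast_add_one, mul_add_one, eexp_add]
  ring

lemma norm_sum_eexp_mul_norm_le (θ : ℝ) (a b : ℕ) :
    ‖∑ u ∈ Ico a b, eexp (θ * u)‖ * ‖(θ : UnitAddCircle)‖ ≤ 1 := by
  rcases le_total b a with hba | hab
  · simp [Ico_eq_empty_of_le hba]
  have hprod : ‖eexp θ - 1‖ * ‖∑ u ∈ Ico a b, eexp (θ * u)‖ ≤ 2 := by
    rw [← norm_mul, eexp_sub_one_mul_sum_Ico θ hab]
    refine (norm_sub_le _ _).trans_eq ?_
    rw [norm_eexp, norm_eexp]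
    norm_num
  nlinarith [mul_le_mul_of_nonneg_right (four_mul_norm_le_norm_eexp_sub_one θ)
    (norm_nonneg (∑ u ∈ Ico a b, eexp (θ * u)))]

lemma norm_sum_eexp_le_card (θ : ℝ) (s : Finset ℕ) : ‖∑ u ∈ s, eexp (θ * u)‖ ≤ #s := by
  simpa [norm_eexp] using norm_sum_le s fun u : ℕ => eexp (θ * u)

/-! ### Partial summation -/

lemma norm_sum_range_smul_le_of_antitone {E : Type*} [NormedAddCommGroup E] [NormedSpace ℝ E]
    {w : ℕ → ℝ} {z : ℕ → E} {B : ℝ} (hw : Antitone w) (hw₀ : ∀ i, 0 ≤ w i) (n : ℕ)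
    (hz : ∀ m ≤ n, ‖∑ i ∈ range m, z i‖ ≤ B) : ‖∑ i ∈ range n, w i • z i‖ ≤ w 0 * B := by
  have hdiff (i : ℕ) : 0 ≤ w i - w (i + 1) := sub_nonneg.2 (hw i.le_succ)
  rw [sum_range_by_parts]
  calc ‖w (n - 1) • ∑ i ∈ range n, z i
        - ∑ i ∈ range (n - 1), (w (i + 1) - w i) • ∑ j ∈ range (i + 1), z j‖
      ≤ ‖w (n - 1) • ∑ i ∈ range n, z i‖
        + ∑ i ∈ range (n - 1), ‖(w (i + 1) - w i) • ∑ j ∈ range (i + 1), z j‖ :=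
        (norm_sub_le _ _).trans (by gcongr; exact norm_sum_le _ _)
    _ ≤ w (n - 1) * B + ∑ i ∈ range (n - 1), (w i - w (i + 1)) * B := by
      gcongr with i hi
      · rw [norm_smul, Real.norm_of_nonneg (hw₀ _)]
        exact mul_le_mul_of_nonneg_left (hz n le_rfl) (hw₀ _)
      · rw [norm_smul, norm_sub_rev, Real.norm_of_nonneg (hdiff i)]
        exact mul_le_mul_of_nonneg_left (hz _ (by have := mem_range.1 hi; omega)) (hdiff i)
    _ = w 0 * B := by rw [← sum_mul, sum_range_sub']; ring

lemma monotone_log_natCast : Monotone fun n : ℕ => Real.log n := fun m n hmn => by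
  rcases Nat.eq_zero_or_pos m with rfl | hm
  · simpa using Real.log_natCast_nonneg n
  · exact Real.log_le_log (mod_cast hm) (mod_cast hmn)

lemma norm_sum_log_smul_le {E : Type*} [NormedAddCommGroup E] [NormedSpace ℝ E] {z : ℕ → E}
    {B : ℝ} (n : ℕ) (hz : ∀ m, ‖∑ i ∈ Ico m (n + 1), z i‖ ≤ B) :
    ‖∑ i ∈ Ioc 0 n, Real.log i • z i‖ ≤ Real.log n * B := by
  have hanti : Antitone fun i : ℕ => Real.log (n - i : ℕ) := fun i j hij =>
    monotone_log_natCast (Nat.sub_le_sub_left hij n)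
  have hbound := norm_sum_range_smul_le_of_antitone (z := fun i => z (n - i)) hanti
    (fun i => Real.log_natCast_nonneg _) n fun _ hm => by
      rw [range_eq_Ico, sum_Ico_reflect z 0 (by omega)]
      exact hz _
  rw [range_eq_Ico, sum_Ico_reflect (fun i => Real.log i • z i) 0 (by omega)] at hbound
  have hinterval : Ico (n + 1 - n) (n + 1 - 0) = Ioc 0 n := by ext; simp; omega
  rwa [hinterval, Nat.sub_zero] at hbound

lemma norm_sum_log_smul_eexp_le (θ : ℝ) (n : ℕ) :
    ‖∑ m ∈ Ioc 0 n, Real.log m • eexp (θ * m)‖ ≤ Real.log n * n := by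
  calc ‖∑ m ∈ Ioc 0 n, Real.log m • eexp (θ * m)‖ ≤ ∑ _ ∈ Ioc 0 n, Real.log n := by
        refine norm_sum_le_of_le _ fun m hm => ?_
        rw [norm_smul, norm_eexp, mul_one, Real.norm_of_nonneg (Real.log_natCast_nonneg m)]
        exact monotone_log_natCast (mem_Ioc.1 hm).2
    _ = Real.log n * n := by simp [mul_comm]

lemma norm_sum_log_smul_eexp_mul_norm_le (θ : ℝ) (n : ℕ) :
    ‖∑ m ∈ Ioc 0 n, Real.log m • eexp (θ * m)‖ * ‖(θ : UnitAddCircle)‖ ≤ Real.log n := by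
  rcases (norm_nonneg (θ : UnitAddCircle)).eq_or_lt with h | h
  · simpa [← h] using Real.log_natCast_nonneg n
  · have := norm_sum_log_smul_le (z := fun m : ℕ => eexp (θ * m)) n fun _ =>
      (le_div_iff₀ h).2 (norm_sum_eexp_mul_norm_le θ _ (n + 1))
    rwa [mul_one_div, le_div_iff₀ h] at this

/-! ### Well-spaced points on the circle -/

/-- The sequence `X, c, c/2, c/3, …`. It dominates a function of well-spaced points `θ` of the
circle that is bounded by `min (X, 1/‖θ‖)`. -/
noncomputable def harmonicWeight (X c : ℝ) (j : ℕ) : ℝ := if j = 0 then X else c / j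

lemma harmonicWeight_nonneg {X c : ℝ} (hX : 0 ≤ X) (hc : 0 ≤ c) (j : ℕ) :
    0 ≤ harmonicWeight X c j := by
  unfold harmonicWeight
  split_ifs <;> positivity

lemma sum_range_harmonicWeight_le {c : ℝ} (hc : 0 ≤ c) (X : ℝ) (n : ℕ) :
    ∑ j ∈ range (n + 1), harmonicWeight X c j ≤ X + c * (1 + Real.log n) := by
  have hsum : ∑ j ∈ range n, harmonicWeight X c (j + 1) = c * harmonic n := by
    simp [harmonicWeight, harmonic, mul_sum, div_eq_mul_inv]
  rw [sum_range_succ', hsum, add_comm]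
  gcongr
  · simp [harmonicWeight]
  · exact harmonic_le_one_add_log n

lemma le_harmonicWeight {F X c : ℝ} {j : ℕ} (hF : j = 0 → F ≤ X) (hFj : F * j ≤ c) :
    F ≤ harmonicWeight X c j := by
  unfold harmonicWeight
  split_ifs with hj
  · exact hF hj
  · rwa [le_div_iff₀ (mod_cast Nat.pos_of_ne_zero hj)]

lemma le_harmonicWeight_floor_add_reflect {m : ℕ} (hm : 0 < m) {F X x : ℝ} (hX : 0 ≤ X)
    (hF : F ≤ X) (hFx : F * ‖(x : UnitAddCircle)‖ ≤ 1) :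
    F ≤ harmonicWeight X m ⌊m * Int.fract x⌋₊
      + harmonicWeight X m (m - 1 - ⌊m * Int.fract x⌋₊) := by
  have hm' : (0 : ℝ) < m := mod_cast hm
  have hfract := Int.fract_nonneg x
  have hlower : (⌊m * Int.fract x⌋₊ : ℝ) ≤ m * Int.fract x := Nat.floor_le (by positivity)
  have hupper : ((m - 1 - ⌊m * Int.fract x⌋₊ : ℕ) : ℝ) ≤ m * (1 - Int.fract x) := by
    have hlt := Nat.lt_floor_add_one (m * Int.fract x)
    have hfloor : ⌊m * Int.fract x⌋₊ < m := by
      rw [Nat.floor_lt (by positivity)]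
      nlinarith [Int.fract_lt_one x]
    rw [Nat.cast_sub (by omega), Nat.cast_pred hm]
    linarith
  have hv (j : ℕ) := harmonicWeight_nonneg hX hm'.le j
  have hle {d : ℝ} {j : ℕ} (hFd : F * d ≤ 1) (hj : j ≤ m * d) : F ≤ harmonicWeight X m j := by
    refine le_harmonicWeight (fun _ => hF) ?_
    rcases le_total F 0 with h | h <;> nlinarith [j.cast_nonneg (α := ℝ)]
  rw [UnitAddCircle.norm_eq, abs_sub_round_eq_min] at hFx
  rcases min_choice (Int.fract x) (1 - Int.fract x) with h | h <;> rw [h] at hFx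
  · exact (hle hFx hlower).trans (le_add_of_nonneg_right (hv _))
  · exact (hle hFx hupper).trans (le_add_of_nonneg_left (hv _))

lemma injOn_floor_mul_fract_of_separated {ι : Type*} {s : Finset ι} {x : ι → ℝ} {m : ℕ}
    (hm : 0 < m) (hx : (s : Set ι).Pairwise fun i j =>
      1 / (m : ℝ) ≤ ‖((x i - x j : ℝ) : UnitAddCircle)‖) :
    Set.InjOn (fun i => ⌊m * Int.fract (x i)⌋₊) s := by
  intro i hi j hj hij
  by_contra hne
  have hm' : (0 : ℝ) < m := mod_cast hm
  have hfract : ((x i - x j : ℝ) : UnitAddCircle)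
      = ((Int.fract (x i) - Int.fract (x j) : ℝ) : UnitAddCircle) := by
    rw [AddCircle.coe_sub, AddCircle.coe_sub, AddCircle.coe_fract, AddCircle.coe_fract]
  have hle : 1 / (m : ℝ) ≤ |Int.fract (x i) - Int.fract (x j)| := by
    refine (hx hi hj hne).trans ?_
    rw [hfract]
    exact QuotientAddGroup.norm_mk_le_norm
  have hlt : |m * Int.fract (x i) - m * Int.fract (x j)| < 1 := by
    refine Int.abs_sub_lt_one_of_floor_eq_floor ?_
    have h₀ (k : ι) : 0 ≤ m * Int.fract (x k) := by
      have := Int.fract_nonneg (x k)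
      positivity
    rw [← Int.natCast_floor_eq_floor (h₀ i), ← Int.natCast_floor_eq_floor (h₀ j)]
    exact_mod_cast hij
  rw [← mul_sub, abs_mul, abs_of_pos hm'] at hlt
  rw [div_le_iff₀ hm'] at hle
  linarith

lemma sum_le_of_separated {ι : Type*} {s : Finset ι} {x F : ι → ℝ} {m : ℕ} {X : ℝ} (hm : 0 < m)
    (hX : 0 ≤ X) (hx : (s : Set ι).Pairwise fun i j =>
      1 / (m : ℝ) ≤ ‖((x i - x j : ℝ) : UnitAddCircle)‖)
    (hF : ∀ i ∈ s, F i ≤ X) (hFx : ∀ i ∈ s, F i * ‖(x i : UnitAddCircle)‖ ≤ 1) :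
    ∑ i ∈ s, F i ≤ 2 * X + 2 * m * (1 + Real.log m) := by
  have hm' : (0 : ℝ) < m := mod_cast hm
  set v := harmonicWeight X m
  have hv₀ (j : ℕ) : 0 ≤ v j := harmonicWeight_nonneg hX hm'.le j
  calc ∑ i ∈ s, F i
      ≤ ∑ i ∈ s, (v ⌊m * Int.fract (x i)⌋₊ + v (m - 1 - ⌊m * Int.fract (x i)⌋₊)) :=
        sum_le_sum fun i hi => le_harmonicWeight_floor_add_reflect hm hX (hF i hi) (hFx i hi)
    _ = ∑ j ∈ s.image fun i => ⌊m * Int.fract (x i)⌋₊, (v j + v (m - 1 - j)) :=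
        (sum_image (f := fun j => v j + v (m - 1 - j))
          (injOn_floor_mul_fract_of_separated hm hx)).symm
    _ ≤ ∑ j ∈ range m, (v j + v (m - 1 - j)) := by
        refine sum_le_sum_of_subset_of_nonneg (fun j hj => ?_)
          fun j _ _ => add_nonneg (hv₀ _) (hv₀ _)
        obtain ⟨i, -, rfl⟩ := mem_image.1 hj
        have := Int.fract_nonneg (x i)
        rw [mem_range, Nat.floor_lt (by positivity)]
        nlinarith [Int.fract_lt_one (x i)]
    _ = 2 * ∑ j ∈ range m, v j := by rw [sum_add_distrib, sum_range_reflect, two_mul]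
    _ ≤ 2 * ∑ j ∈ range (m + 1), v j := by
        gcongr
        · exact fun j _ _ => hv₀ j
        · exact m.le_succ
    _ ≤ 2 * X + 2 * m * (1 + Real.log m) := by
        have := sum_range_harmonicWeight_le hm'.le X m
        linarith

/-! ### Exponential sums over multiples of a Diophantine approximation -/

/-- The reduced fraction `a / q` approximates `α` to within `1 / q ^ 2`, as Dirichlet's theorem
provides. -/
structure IsDirichletApprox (α : ℝ) (a : ℤ) (q : ℕ) : Prop where
  one_le : 1 ≤ q
  gcd_eq_one : Int.gcd a q = 1
  abs_sub_le : |α - a / q| ≤ 1 / (q : ℝ) ^ 2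

namespace IsDirichletApprox

variable {α : ℝ} {a : ℤ} {q : ℕ}

lemma cast_pos (h : IsDirichletApprox α a q) : (0 : ℝ) < q := mod_cast h.one_le

lemma not_dvd_mul (h : IsDirichletApprox α a q) {j : ℤ} (hj : j ≠ 0) (hjq : 2 * |j| ≤ q) :
    ¬ (q : ℤ) ∣ a * j := by
  intro hdvd
  have hcop : IsCoprime (q : ℤ) a := (Int.isCoprime_iff_gcd_eq_one.2 h.gcd_eq_one).symm
  have hle := Int.le_of_dvd (abs_pos.2 hj) ((dvd_abs _ _).2 (hcop.dvd_of_dvd_mul_left hdvd))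
  have := h.one_le
  omega

lemma one_div_le_norm_mul (h : IsDirichletApprox α a q) {j : ℤ} (hj : j ≠ 0)
    (hjq : 2 * |j| ≤ q) : 1 / (2 * q : ℝ) ≤ ‖((α * j : ℝ) : UnitAddCircle)‖ := by
  have hq := h.cast_pos
  set m := round (α * j)
  have hfrac : 1 / (q : ℝ) ≤ |(a : ℝ) / q * j - m| := by
    have hne : a * j - m * q ≠ 0 := fun h₀ =>
      h.not_dvd_mul hj hjq ⟨m, by linarith⟩
    have hint : (1 : ℝ) ≤ |(a : ℝ) * j - m * q| := mod_cast Int.one_le_abs hne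
    rw [show (a : ℝ) / q * j - m = (a * j - m * q) / q by field_simp, abs_div, abs_of_pos hq]
    gcongr
  have herror : |(α - a / q) * j| ≤ 1 / (2 * q) := by
    have hj' : |(j : ℝ)| ≤ q / 2 := by
      rw [le_div_iff₀' two_pos]
      exact_mod_cast hjq
    calc |(α - a / q) * j| ≤ 1 / (q : ℝ) ^ 2 * (q / 2) := by
          rw [abs_mul]
          exact mul_le_mul h.abs_sub_le hj' (abs_nonneg _) (by positivity)
      _ = 1 / (2 * q) := by field_simp
  have htri := abs_sub (α * j - m) ((α - a / q) * j)
  rw [show α * j - m - (α - a / q) * j = a / q * j - m by ring] at htri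
  rw [UnitAddCircle.norm_eq]
  have hhalves : 1 / (q : ℝ) = 1 / (2 * q) + 1 / (2 * q) := by field_simp; norm_num
  linarith

lemma sum_block_le (h : IsDirichletApprox α a q) (β : ℝ) {F : ℕ → ℝ} {X : ℝ} (hX : 0 ≤ X)
    (k₀ : ℕ) (hF : ∀ k ∈ Ico k₀ (k₀ + (q / 2 + 1)), F k ≤ X)
    (hFn : ∀ k ∈ Ico k₀ (k₀ + (q / 2 + 1)), F k * ‖((α * k + β : ℝ) : UnitAddCircle)‖ ≤ 1) :
    ∑ k ∈ Ico k₀ (k₀ + (q / 2 + 1)), F k ≤ 2 * X + 4 * q * (1 + Real.log (2 * q)) := by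
  have hsep : ((Ico k₀ (k₀ + (q / 2 + 1)) : Finset ℕ) : Set ℕ).Pairwise fun i k =>
      1 / ((2 * q : ℕ) : ℝ) ≤ ‖((α * i + β - (α * k + β) : ℝ) : UnitAddCircle)‖ := by
    intro i hi k hk hik
    rw [mem_coe, mem_Ico] at hi hk
    rw [show α * i + β - (α * k + β) = α * ((i - k : ℤ) : ℝ) by push_cast; ring]
    push_cast
    exact_mod_cast h.one_div_le_norm_mul (j := i - k) (by omega) (by grind)
  have := sum_le_of_separated (by have := h.one_le; omega) hX hsep hF hFn
  push_cast at this
  linarith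

lemma cast_div_half_succ_le (h : IsDirichletApprox α a q) (Y : ℕ) :
    ((Y / (q / 2 + 1) : ℕ) : ℝ) ≤ 2 * Y / q := by
  have hhalf : (q : ℝ) ≤ 2 * (q / 2 + 1 : ℕ) := by exact_mod_cast (by omega)
  refine Nat.cast_div_le.trans ?_
  rw [div_le_div_iff₀ (by positivity) h.cast_pos]
  nlinarith [Y.cast_nonneg (α := ℝ)]

lemma sum_range_le (h : IsDirichletApprox α a q) (β : ℝ) {F X : ℕ → ℝ} (hX : ∀ j, 0 ≤ X j)
    (hF₀ : ∀ k, 0 ≤ F k) (hF : ∀ k, F k ≤ X (k / (q / 2 + 1)))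
    (hFn : ∀ k : ℕ, F k * ‖((α * k + β : ℝ) : UnitAddCircle)‖ ≤ 1) (Y : ℕ) :
    ∑ k ∈ range (Y + 1), F k ≤ 2 * ∑ j ∈ range (Y / (q / 2 + 1) + 1), X j
      + (8 * Y + 4 * q) * (1 + Real.log (2 * q)) := by
  have hq := h.cast_pos
  set b := q / 2 + 1
  set D := 1 + Real.log (2 * q)
  have hD : 0 ≤ D := add_nonneg zero_le_one (mod_cast Real.log_natCast_nonneg (2 * q))
  have hblocks (n : ℕ) :
      ∑ k ∈ range (n * b), F k ≤ 2 * ∑ j ∈ range n, X j + n * (4 * q * D) := by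
    induction n with
    | zero => simp
    | succ n ih =>
      have hblock := h.sum_block_le β (hX n) (n * b) (F := F)
        (fun k hk => by
          rw [mem_Ico, ← Nat.succ_mul] at hk
          simpa only [Nat.div_eq_of_lt_le hk.1 hk.2] using hF k)
        fun k _ => hFn k
      rw [Nat.succ_mul, ← sum_range_add_sum_Ico _ (Nat.le_add_right _ _), sum_range_succ]
      push_cast
      linarith
  calc ∑ k ∈ range (Y + 1), F k ≤ ∑ k ∈ range ((Y / b + 1) * b), F k := by
        gcongr
        · exact fun k _ _ => hF₀ k
        · rw [Nat.succ_mul]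
          exact Nat.lt_div_mul_add (Nat.succ_pos _)
    _ ≤ 2 * ∑ j ∈ range (Y / b + 1), X j + (2 * Y / q + 1) * (4 * q * D) := by
        refine (hblocks _).trans ?_
        push_cast
        have := h.cast_div_half_succ_le Y
        gcongr
    _ = _ := by field_simp; ring

lemma sum_range_le_of_le (h : IsDirichletApprox α a q) (β : ℝ) {F : ℕ → ℝ} {X : ℝ} (hX : 0 ≤ X)
    (hF₀ : ∀ k, 0 ≤ F k) (hF : ∀ k, F k ≤ X)
    (hFn : ∀ k : ℕ, F k * ‖((α * k + β : ℝ) : UnitAddCircle)‖ ≤ 1) (Y : ℕ) :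
    ∑ k ∈ range (Y + 1), F k ≤ 2 * X * (2 * Y / q + 1)
      + (8 * Y + 4 * q) * (1 + Real.log (2 * q)) := by
  refine (h.sum_range_le β (fun _ => hX) hF₀ hF hFn Y).trans ?_
  rw [sum_const, card_range, nsmul_eq_mul, Nat.cast_add_one, mul_left_comm, mul_comm _ (2 * X)]
  gcongr
  exact h.cast_div_half_succ_le Y

lemma sum_Ioc_le_of_mul_le (h : IsDirichletApprox α a q) {F : ℕ → ℝ} {N : ℝ} (hN : 0 ≤ N)
    (hF_zero : F 0 = 0) (hF₀ : ∀ k, 0 ≤ F k) (hF : ∀ k, F k * k ≤ N)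
    (hFn : ∀ k : ℕ, F k * ‖((α * k : ℝ) : UnitAddCircle)‖ ≤ 1) (K : ℕ) :
    ∑ k ∈ Ioc 0 K, F k ≤ 4 * q + 4 * N / q * (1 + Real.log K)
      + (8 * K + 4 * q) * (1 + Real.log (2 * q)) := by
  have hq := h.cast_pos
  set b := q / 2 + 1
  have hb : (q : ℝ) ≤ 2 * b := by exact_mod_cast (by omega)
  set X := harmonicWeight (2 * q) (2 * N / q)
  have hX (j : ℕ) : 0 ≤ X j := harmonicWeight_nonneg (by positivity) (by positivity) j
  have hFX (k : ℕ) (hk : k ≠ 0) : F k ≤ X (k / b) := by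
    refine le_harmonicWeight (fun hkb => ?_) ?_
    · rw [Nat.div_eq_zero_iff_lt (Nat.succ_pos _)] at hkb
      have hnorm := h.one_div_le_norm_mul (j := k) (mod_cast hk) (by grind)
      have := (mul_le_mul_of_nonneg_left hnorm (hF₀ k)).trans (hFn k)
      rwa [mul_one_div, div_le_one (by positivity)] at this
    · have hk : (k / b : ℕ) * (q : ℝ) ≤ 2 * k := by
        have : ((k / b : ℕ) * b : ℝ) ≤ k := mod_cast Nat.div_mul_le_self k b
        nlinarith [(k / b).cast_nonneg (α := ℝ)]
      rw [le_div_iff₀ hq]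
      nlinarith [hF₀ k, hF k]
  calc ∑ k ∈ Ioc 0 K, F k ≤ ∑ k ∈ range (K + 1), F k := by
        gcongr
        · exact fun k _ _ => hF₀ k
        · exact fun k hk => mem_range.2 (Nat.lt_succ_of_le (mem_Ioc.1 hk).2)
    _ ≤ 2 * ∑ j ∈ range (K / b + 1), X j + (8 * K + 4 * q) * (1 + Real.log (2 * q)) := by
        refine h.sum_range_le 0 hX hF₀ (fun k => ?_)
          (fun k => by simpa only [add_zero] using hFn k) K
        rcases eq_or_ne k 0 with rfl | hk
        · exact hF_zero.trans_le (hX _)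
        · exact hFX k hk
    _ ≤ 2 * (2 * q + 2 * N / q * (1 + Real.log K))
          + (8 * K + 4 * q) * (1 + Real.log (2 * q)) := by
        gcongr
        refine (sum_range_harmonicWeight_le (by positivity) _ _).trans ?_
        gcongr 2 * q + 2 * N / q * (1 + ?_)
        exact monotone_log_natCast (Nat.div_le_self _ _)
    _ = _ := by ring

end IsDirichletApprox

/-! ### Sums of the divisor function -/

lemma sum_Ioc_sum_divisorsAntidiagonal {M : Type*} [AddCommMonoid M] (F : ℕ → ℕ → M) (N : ℕ) :
    ∑ n ∈ Ioc 0 N, ∑ x ∈ n.divisorsAntidiagonal, F x.1 x.2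
      = ∑ u ∈ Ioc 0 N, ∑ m ∈ Ioc 0 (N / u), F u m := by
  calc ∑ n ∈ Ioc 0 N, ∑ x ∈ n.divisorsAntidiagonal, F x.1 x.2
      = ∑ n ∈ Ioc 0 N, ∑ x ∈ Ioc 0 N ×ˢ Ioc 0 N, if x.1 * x.2 = n then F x.1 x.2 else 0 := by
        refine sum_congr rfl fun n hn => ?_
        rw [mem_Ioc] at hn
        rw [Nat.divisorsAntidiagonal_eq_prod_filter_of_le hn.1.ne' hn.2, sum_filter]
    _ = ∑ x ∈ Ioc 0 N ×ˢ Ioc 0 N, if x.1 * x.2 ≤ N then F x.1 x.2 else 0 := by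
        rw [sum_comm]
        refine sum_congr rfl fun x hx => ?_
        simp only [mem_product, mem_Ioc] at hx
        have := Nat.mul_pos hx.1.1 hx.2.1
        simp only [sum_ite_eq, mem_Ioc, this, true_and]
    _ = ∑ u ∈ Ioc 0 N, ∑ m ∈ Ioc 0 (N / u), F u m := by
        rw [sum_product]
        refine sum_congr rfl fun u hu => ?_
        rw [mem_Ioc] at hu
        rw [← sum_filter]
        congr 1
        ext m
        rw [mem_filter, mem_Ioc, mem_Ioc, Nat.le_div_iff_mul_le hu.1, mul_comm m]
        refine ⟨fun h => ⟨h.1.1, h.2⟩, fun h => ⟨⟨h.1, ?_⟩, h.2⟩⟩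
        exact (Nat.le_mul_of_pos_left m hu.1).trans h.2

lemma sum_divisorsAntidiagonal_const {R : Type*} [Semiring R] (n : ℕ) (r : R) :
    ∑ _x ∈ n.divisorsAntidiagonal, r = #n.divisors * r := by
  rw [sum_const, nsmul_eq_mul, ← Nat.map_div_right_divisors, card_map]

lemma sum_Ioc_inv_le (n : ℕ) : ∑ u ∈ Ioc 0 n, (u : ℝ)⁻¹ ≤ 1 + Real.log n := by
  have h := harmonic_le_one_add_log n
  simp only [harmonic_eq_sum_Icc, Rat.cast_sum, Rat.cast_inv, Rat.cast_natCast] at h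
  exact h

lemma sum_card_divisors_le (N : ℕ) :
    ∑ n ∈ Ioc 0 N, (#n.divisors : ℝ) ≤ N * (1 + Real.log N) := by
  have h := ArithmeticFunction.sum_Ioc_sigma0_eq_sum_div N
  simp only [ArithmeticFunction.sigma_zero_apply] at h
  calc ∑ n ∈ Ioc 0 N, (#n.divisors : ℝ) = ∑ n ∈ Ioc 0 N, ((N / n : ℕ) : ℝ) := mod_cast h
    _ ≤ ∑ n ∈ Ioc 0 N, N * (n : ℝ)⁻¹ := sum_le_sum fun n _ => Nat.cast_div_le
    _ ≤ N * (1 + Real.log N) := by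
        rw [← mul_sum]
        gcongr
        exact sum_Ioc_inv_le N

lemma sum_card_divisors_mul_inv_le (N : ℕ) :
    ∑ n ∈ Ioc 0 N, #n.divisors * (n : ℝ)⁻¹ ≤ (1 + Real.log N) ^ 2 := by
  calc ∑ n ∈ Ioc 0 N, #n.divisors * (n : ℝ)⁻¹
      = ∑ n ∈ Ioc 0 N, ∑ x ∈ n.divisorsAntidiagonal, (x.1 : ℝ)⁻¹ * (x.2 : ℝ)⁻¹ := by
        refine sum_congr rfl fun n _ => ?_
        rw [← sum_divisorsAntidiagonal_const]
        refine sum_congr rfl fun x hx => ?_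
        rw [← (Nat.mem_divisorsAntidiagonal.1 hx).1, Nat.cast_mul, mul_inv]
    _ = ∑ u ∈ Ioc 0 N, ∑ m ∈ Ioc 0 (N / u), (u : ℝ)⁻¹ * (m : ℝ)⁻¹ :=
        sum_Ioc_sum_divisorsAntidiagonal (fun u m => (u : ℝ)⁻¹ * (m : ℝ)⁻¹) N
    _ ≤ ∑ u ∈ Ioc 0 N, (u : ℝ)⁻¹ * (1 + Real.log N) := by
        refine sum_le_sum fun u _ => ?_
        rw [← mul_sum]
        gcongr
        refine (sum_Ioc_inv_le _).trans ?_
        gcongr 1 + ?_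
        exact monotone_log_natCast (Nat.div_le_self N u)
    _ ≤ (1 + Real.log N) ^ 2 := by
        rw [← sum_mul, sq]
        gcongr
        exact sum_Ioc_inv_le N

lemma card_divisors_mul_le (m n : ℕ) : #(m * n).divisors ≤ #m.divisors * #n.divisors := by
  rw [Nat.divisors_mul]
  exact card_mul_le

lemma sum_card_divisors_sq_le (N : ℕ) :
    ∑ n ∈ Ioc 0 N, (#n.divisors : ℝ) ^ 2 ≤ N * (1 + Real.log N) ^ 3 := by
  calc ∑ n ∈ Ioc 0 N, (#n.divisors : ℝ) ^ 2
      = ∑ n ∈ Ioc 0 N, ∑ x ∈ n.divisorsAntidiagonal, (#(x.1 * x.2).divisors : ℝ) := by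
        refine sum_congr rfl fun n _ => ?_
        rw [sq, ← sum_divisorsAntidiagonal_const]
        refine sum_congr rfl fun x hx => ?_
        rw [(Nat.mem_divisorsAntidiagonal.1 hx).1]
    _ = ∑ u ∈ Ioc 0 N, ∑ m ∈ Ioc 0 (N / u), (#(u * m).divisors : ℝ) :=
        sum_Ioc_sum_divisorsAntidiagonal (fun u m => (#(u * m).divisors : ℝ)) N
    _ ≤ ∑ u ∈ Ioc 0 N, #u.divisors * ∑ m ∈ Ioc 0 (N / u), (#m.divisors : ℝ) := by
        simp_rw [mul_sum]
        exact sum_le_sum fun u _ => sum_le_sum fun m _ => mod_cast card_divisors_mul_le u m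
    _ ≤ ∑ u ∈ Ioc 0 N, #u.divisors * ((N * (u : ℝ)⁻¹) * (1 + Real.log N)) := by
        gcongr with u
        refine (sum_card_divisors_le _).trans ?_
        gcongr ?_ * (1 + ?_)
        · exact Nat.cast_div_le
        · exact monotone_log_natCast (Nat.div_le_self N u)
    _ = N * (1 + Real.log N) * ∑ u ∈ Ioc 0 N, #u.divisors * (u : ℝ)⁻¹ := by
        rw [mul_sum]
        exact sum_congr rfl fun u _ => by ring
    _ ≤ N * (1 + Real.log N) * (1 + Real.log N) ^ 2 := by
        gcongr
        exact sum_card_divisors_mul_inv_le N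
    _ = N * (1 + Real.log N) ^ 3 := by ring

lemma sum_mul_smul_eq_sum_sum {R M : Type*} [Semiring R] [AddCommMonoid M] [Module R M]
    (f g : ArithmeticFunction R) (z : ℕ → M) (N : ℕ) :
    ∑ n ∈ Ioc 0 N, (f * g) n • z n
      = ∑ u ∈ Ioc 0 N, f u • ∑ m ∈ Ioc 0 (N / u), g m • z (u * m) := by
  simp_rw [smul_sum, smul_smul]
  rw [← sum_Ioc_sum_divisorsAntidiagonal fun u m => (f u * g m) • z (u * m)]
  refine sum_congr rfl fun n _ => ?_
  rw [ArithmeticFunction.mul_apply, sum_smul]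
  refine sum_congr rfl fun x hx => ?_
  rw [(Nat.mem_divisorsAntidiagonal.1 hx).1]

/-! ### Bilinear forms -/

section Bilinear

variable {ι κ 𝕜 : Type*} [RCLike 𝕜]

open ComplexConjugate

lemma sum_sum_mul_mul_le_of_symm {t : Finset κ} {K : κ → κ → ℝ} {R : ℝ} (x : κ → ℝ)
    (hK₀ : ∀ m n, 0 ≤ K m n) (hK : ∀ m n, K m n = K n m) (hR : ∀ m ∈ t, ∑ n ∈ t, K m n ≤ R) :
    ∑ m ∈ t, ∑ n ∈ t, x m * x n * K m n ≤ (∑ m ∈ t, x m ^ 2) * R := by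
  calc ∑ m ∈ t, ∑ n ∈ t, x m * x n * K m n
      ≤ ∑ m ∈ t, ∑ n ∈ t, (x m ^ 2 / 2 * K m n + x n ^ 2 / 2 * K n m) := by
        refine sum_le_sum fun m _ => sum_le_sum fun n _ => ?_
        rw [hK n m, ← add_mul]
        exact mul_le_mul_of_nonneg_right (by linarith [two_mul_le_add_sq (x m) (x n)]) (hK₀ m n)
    _ = ∑ m ∈ t, x m ^ 2 * ∑ n ∈ t, K m n := by
        simp_rw [sum_add_distrib]
        rw [sum_comm (f := fun m n => x n ^ 2 / 2 * K n m), ← sum_add_distrib]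
        refine sum_congr rfl fun m _ => ?_
        rw [← mul_sum, ← add_mul, add_halves]
    _ ≤ (∑ m ∈ t, x m ^ 2) * R := by
        rw [sum_mul]
        exact sum_le_sum fun m hm => mul_le_mul_of_nonneg_left (hR m hm) (sq_nonneg _)

lemma sum_norm_sq_eq_sum_sum_correlation (s : Finset ι) (t : Finset κ) (c : ι → κ → 𝕜)
    (g : κ → 𝕜) : ((∑ u ∈ s, ‖∑ n ∈ t, c u n * g n‖ ^ 2 : ℝ) : 𝕜)
      = ∑ m ∈ t, ∑ n ∈ t, conj (g m) * g n * ∑ u ∈ s, conj (c u m) * c u n := by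
  simp_rw [mul_sum]
  rw [sum_congr rfl fun m _ => sum_comm, sum_comm, RCLike.ofReal_sum]
  refine sum_congr rfl fun u _ => ?_
  rw [RCLike.ofReal_pow, ← RCLike.conj_mul, map_sum, sum_mul_sum]
  refine sum_congr rfl fun m _ => sum_congr rfl fun n _ => ?_
  rw [map_mul]
  ring

lemma sum_norm_sq_le_of_correlation_le {s : Finset ι} {t : Finset κ} {c : ι → κ → 𝕜} {R : ℝ}
    (g : κ → 𝕜) (hR : ∀ m ∈ t, ∑ n ∈ t, ‖∑ u ∈ s, conj (c u m) * c u n‖ ≤ R) :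
    ∑ u ∈ s, ‖∑ n ∈ t, c u n * g n‖ ^ 2 ≤ (∑ n ∈ t, ‖g n‖ ^ 2) * R := by
  have hsymm (m n : κ) :
      ‖∑ u ∈ s, conj (c u m) * c u n‖ = ‖∑ u ∈ s, conj (c u n) * c u m‖ := by
    rw [← RCLike.norm_conj, map_sum]
    simp only [map_mul, RCLike.conj_conj, mul_comm]
  refine le_trans ?_ (sum_sum_mul_mul_le_of_symm (fun n => ‖g n‖) (fun _ _ => norm_nonneg _)
    hsymm hR)
  rw [← RCLike.norm_of_nonneg (K := 𝕜) (sum_nonneg fun u _ => sq_nonneg _),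
    sum_norm_sq_eq_sum_sum_correlation]
  refine norm_sum_le_of_le _ fun m _ => norm_sum_le_of_le _ fun n _ => ?_
  rw [norm_mul, norm_mul, RCLike.norm_conj]

lemma norm_sq_bilinear_le_of_correlation_le {s : Finset ι} {t : Finset κ} {c : ι → κ → 𝕜} {R : ℝ}
    (f : ι → 𝕜) (g : κ → 𝕜) (hR : ∀ m ∈ t, ∑ n ∈ t, ‖∑ u ∈ s, conj (c u m) * c u n‖ ≤ R) :
    ‖∑ u ∈ s, f u * ∑ n ∈ t, c u n * g n‖ ^ 2
      ≤ (∑ u ∈ s, ‖f u‖ ^ 2) * ((∑ n ∈ t, ‖g n‖ ^ 2) * R) := by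
  calc ‖∑ u ∈ s, f u * ∑ n ∈ t, c u n * g n‖ ^ 2
      ≤ (∑ u ∈ s, ‖f u‖ * ‖∑ n ∈ t, c u n * g n‖) ^ 2 := by
        gcongr
        exact norm_sum_le_of_le _ fun u _ => (norm_mul _ _).le
    _ ≤ (∑ u ∈ s, ‖f u‖ ^ 2) * ∑ u ∈ s, ‖∑ n ∈ t, c u n * g n‖ ^ 2 :=
        sum_mul_sq_le_sq_mul_sq _ _ _
    _ ≤ (∑ u ∈ s, ‖f u‖ ^ 2) * ((∑ n ∈ t, ‖g n‖ ^ 2) * R) := by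
        gcongr
        exact sum_norm_sq_le_of_correlation_le g hR

end Bilinear

lemma norm_sum_Ioc_le_of_dyadic {E : Type*} [SeminormedAddCommGroup E] {z : ℕ → E} {D : ℝ} {N : ℕ}
    (hN : N ≠ 0) (hD : ∀ X, 1 ≤ X → X ≤ N → ‖∑ u ∈ Ico X (min (2 * X) (N + 1)), z u‖ ≤ D) :
    ‖∑ u ∈ Ioc 0 N, z u‖ ≤ (Nat.log 2 N + 1) * D := by
  have hprefix (k : ℕ) (hk : k ≤ Nat.log 2 N + 1) :
      ‖∑ u ∈ Ico 1 (min (2 ^ k) (N + 1)), z u‖ ≤ k * D := by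
    induction k with
    | zero => simp
    | succ k ih =>
      have hpow : 2 ^ k ≤ N := Nat.pow_le_of_le_log hN (by omega)
      have ih := ih (by omega)
      rw [min_eq_left (by omega)] at ih
      rw [← sum_Ico_consecutive z Nat.one_le_two_pow (by grind : 2 ^ k ≤ _), pow_succ']
      push_cast
      linarith [norm_add_le_of_le ih (hD _ Nat.one_le_two_pow hpow)]
  have h := hprefix _ le_rfl
  rw [min_eq_right (Nat.lt_pow_succ_log_self one_lt_two N)] at h
  exact_mod_cast h

lemma natLog_two_add_one_le (N : ℕ) : (Nat.log 2 N + 1 : ℝ) ≤ 2 * (1 + Real.log N) := by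
  have hlogb := Real.natLog_le_logb N 2
  rw [Nat.cast_ofNat, ← Real.log_div_log, le_div_iff₀ (Real.log_pos one_lt_two)] at hlogb
  nlinarith [Real.log_two_gt_d9, (Nat.log 2 N).cast_nonneg (α := ℝ)]

lemma one_add_log_two_mul_le {q N : ℕ} (hq : 1 ≤ q) (hqN : q ≤ N) :
    1 + Real.log (2 * q) ≤ 2 * (1 + Real.log N) := by
  rw [Real.log_mul two_ne_zero (by positivity)]
  have := monotone_log_natCast hqN
  linarith [Real.log_two_lt_d9, Real.log_natCast_nonneg N]

open ComplexConjugate in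
lemma sum_conj_truncated_eexp_mul (α : ℝ) (N X Z : ℕ) {m n : ℕ} (hm : 0 < m) :
    ∑ u ∈ Ico X Z, conj (if u * m ≤ N then eexp (α * (u * m : ℕ)) else 0)
        * (if u * n ≤ N then eexp (α * (u * n : ℕ)) else 0)
      = ∑ u ∈ Ico X (min Z (N / max m n + 1)), eexp ((α * n + -(α * m)) * u) := by
  have hterm (u : ℕ) : conj (if u * m ≤ N then eexp (α * (u * m : ℕ)) else 0)
        * (if u * n ≤ N then eexp (α * (u * n : ℕ)) else 0)
      = if u * max m n ≤ N then eexp ((α * n + -(α * m)) * u) else 0 := by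
    simp only [mul_max, sup_le_iff, ite_and]
    split_ifs
    · rw [conj_eexp, ← eexp_add]
      push_cast
      ring_nf
    all_goals simp
  rw [sum_congr rfl fun u _ => hterm u, ← sum_filter]
  congr 1
  ext u
  rw [mem_filter, mem_Ico, mem_Ico, lt_min_iff, Nat.lt_succ_iff,
    Nat.le_div_iff_mul_le (hm.trans_le (le_max_left m n)), and_assoc]

namespace IsDirichletApprox

variable {α : ℝ} {a : ℤ} {q : ℕ}

lemma norm_sq_bilinear_block_le (h : IsDirichletApprox α a q) (f g : ℕ → ℂ) (N : ℕ) {X Z : ℕ}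
    (hX : 1 ≤ X) (hZ : Z ≤ 2 * X) :
    ‖∑ u ∈ Ico X Z, f u * ∑ n ∈ Ioc 0 (N / u), g n * eexp (α * (u * n : ℕ))‖ ^ 2
      ≤ (∑ u ∈ Ico X Z, ‖f u‖ ^ 2) * ((∑ n ∈ Ioc 0 (N / X), ‖g n‖ ^ 2)
        * (2 * X * (2 * (N / X : ℕ) / q + 1)
          + (8 * (N / X : ℕ) + 4 * q) * (1 + Real.log (2 * q)))) := by
  have hinner (u : ℕ) (hu : u ∈ Ico X Z) :
      ∑ n ∈ Ioc 0 (N / u), g n * eexp (α * (u * n : ℕ))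
        = ∑ n ∈ Ioc 0 (N / X), (if u * n ≤ N then eexp (α * (u * n : ℕ)) else 0) * g n := by
    rw [mem_Ico] at hu
    simp_rw [ite_mul, zero_mul, mul_comm (eexp _), ← sum_filter]
    congr 1
    ext n
    rw [mem_filter, mem_Ioc, mem_Ioc, Nat.le_div_iff_mul_le (by omega),
      Nat.le_div_iff_mul_le (by omega), mul_comm u]
    exact ⟨fun hn => ⟨⟨hn.1, (Nat.mul_le_mul_left n hu.1).trans hn.2⟩, hn.2⟩,
      fun hn => ⟨hn.1.1, hn.2⟩⟩
  rw [sum_congr rfl fun u hu => congrArg (f u * ·) (hinner u hu)]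
  refine norm_sq_bilinear_le_of_correlation_le f g fun m hm => ?_
  rw [mem_Ioc] at hm
  simp_rw [sum_conj_truncated_eexp_mul α N X Z hm.1]
  refine le_trans ?_ (h.sum_range_le_of_le (-(α * m)) X.cast_nonneg (fun _ => norm_nonneg _)
    (fun n => (norm_sum_eexp_le_card _ _).trans ?_)
    (fun n => norm_sum_eexp_mul_norm_le _ X (min Z (N / max m n + 1))) (N / X))
  · gcongr
    exact fun n hn => mem_range.2 (Nat.lt_succ_of_le (mem_Ioc.1 hn).2)
  · rw [Nat.card_Ico]
    exact_mod_cast (by omega)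

end IsDirichletApprox

/-! ### Type II sums -/

namespace IsDirichletApprox

variable {α : ℝ} {a : ℤ} {q N U X Z : ℕ} {f g : ℕ → ℂ}

lemma norm_sq_typeII_block_le (h : IsDirichletApprox α a q) (hqN : q ≤ N)
    (hf : ∀ u ≤ N, ‖f u‖ ≤ 1 + Real.log N) (hg : ∀ n, ‖g n‖ ≤ #n.divisors)
    (hX : 1 ≤ X) (hZ : Z ≤ min (2 * X) (N + 1)) :
    ‖∑ u ∈ Ico X Z, f u * ∑ n ∈ Ioc 0 (N / u), g n * eexp (α * (u * n : ℕ))‖ ^ 2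
      ≤ N * (1 + Real.log N) ^ 6 * (4 * N / q + 2 * X + 16 * (N / X) + 8 * q) := by
  have hq := h.cast_pos
  have hX₀ : (0 : ℝ) < X := mod_cast hX
  rw [le_min_iff] at hZ
  set L := 1 + Real.log N
  have hL : 1 ≤ L := le_add_of_nonneg_right (Real.log_natCast_nonneg N)
  have hY : ((N / X : ℕ) : ℝ) ≤ N / X := Nat.cast_div_le
  have hlog : 0 ≤ Real.log (2 * q) := mod_cast Real.log_natCast_nonneg (2 * q)
  have hf_sum : ∑ u ∈ Ico X Z, ‖f u‖ ^ 2 ≤ X * L ^ 2 := by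
    calc ∑ u ∈ Ico X Z, ‖f u‖ ^ 2 ≤ ∑ _u ∈ Ico X Z, L ^ 2 := by
          gcongr with u hu
          exact hf u (by grind)
      _ ≤ X * L ^ 2 := by
          rw [sum_const, Nat.card_Ico, nsmul_eq_mul]
          gcongr
          omega
  have hg_sum : ∑ n ∈ Ioc 0 (N / X), ‖g n‖ ^ 2 ≤ N / X * L ^ 3 := by
    calc ∑ n ∈ Ioc 0 (N / X), ‖g n‖ ^ 2 ≤ ∑ n ∈ Ioc 0 (N / X), (#n.divisors : ℝ) ^ 2 := by
          gcongr with n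
          exact hg n
      _ ≤ (N / X : ℕ) * (1 + Real.log (N / X : ℕ)) ^ 3 := sum_card_divisors_sq_le _
      _ ≤ N / X * L ^ 3 := by
          have hlog : Real.log (N / X : ℕ) ≤ Real.log N :=
            monotone_log_natCast (Nat.div_le_self N X)
          gcongr
          exact add_le_add_right hlog 1
  calc _ ≤ _ := h.norm_sq_bilinear_block_le f g N hX hZ.1
    _ ≤ X * L ^ 2 * (N / X * L ^ 3 * (2 * X * (2 * (N / X) / q + 1)
          + (8 * (N / X) + 4 * q) * (2 * L))) := by
        gcongr
        exact one_add_log_two_mul_le h.one_le hqN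
    _ = N * L ^ 5 * (4 * N / q + 2 * X + (16 * (N / X) + 8 * q) * L) := by field_simp; ring
    _ ≤ N * L ^ 5 * ((4 * N / q + 2 * X) * L + (16 * (N / X) + 8 * q) * L) := by
        gcongr
        exact le_mul_of_one_le_right (by positivity) hL
    _ = _ := by ring

lemma norm_typeII_block_le (h : IsDirichletApprox α a q) (hqN : q ≤ N)
    (hf : ∀ u ≤ N, ‖f u‖ ≤ 1 + Real.log N) (hf_zero : ∀ u ≤ U, f u = 0)
    (hg : ∀ n, ‖g n‖ ≤ #n.divisors) (hg_zero : ∀ n ≤ U, g n = 0)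
    (hX : 1 ≤ X) (hZ : Z ≤ min (2 * X) (N + 1)) :
    ‖∑ u ∈ Ico X Z, f u * ∑ n ∈ Ioc 0 (N / u), g n * eexp (α * (u * n : ℕ))‖
      ≤ 6 * (N * (1 + Real.log N) ^ 3 * √(1 / q + 1 / (U + 1) + q / N)) := by
  have hq := h.cast_pos
  have hN : (0 : ℝ) < N := hq.trans_le (mod_cast hqN)
  have hX₀ : (0 : ℝ) < X := mod_cast hX
  set L := 1 + Real.log N
  have hL : 1 ≤ L := le_add_of_nonneg_right (Real.log_natCast_nonneg N)
  rcases le_or_gt Z (U + 1) with hZU | hZU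
  · rw [sum_eq_zero fun u hu => by rw [hf_zero u (by grind), zero_mul], norm_zero]
    positivity
  rcases lt_or_ge N (X * (U + 1)) with hXU | hXU
  · have hdiv (u : ℕ) (hu : u ∈ Ico X Z) : N / u ≤ U := by
      rw [mem_Ico] at hu
      exact Nat.lt_succ_iff.1 ((Nat.div_lt_iff_lt_mul (by omega)).2
        (hXU.trans_le (by rw [mul_comm]; exact Nat.mul_le_mul_left _ hu.1)))
    rw [sum_eq_zero fun u hu => ?_, norm_zero]
    · positivity
    · rw [sum_eq_zero fun n hn => ?_, mul_zero]
      rw [hg_zero n ((mem_Ioc.1 hn).2.trans (hdiv u hu)), zero_mul]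
  have hXN : (X : ℝ) ≤ N / (U + 1) := by
    rw [le_div_iff₀ (by positivity)]
    exact_mod_cast hXU
  have hNX : (N : ℝ) / X ≤ 2 * N / (U + 1) := by
    have hUX : (U + 1 : ℝ) ≤ 2 * X := mod_cast (hZU.le.trans (hZ.trans (min_le_left _ _)))
    rw [div_le_div_iff₀ hX₀ (by positivity)]
    nlinarith
  refine le_of_sq_le_sq ?_ (by positivity)
  calc _ ≤ N * L ^ 6 * (4 * N / q + 2 * X + 16 * (N / X) + 8 * q) :=
        h.norm_sq_typeII_block_le hqN hf hg hX hZ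
    _ ≤ N * L ^ 6 * (4 * N / q + 2 * (N / (U + 1)) + 16 * (2 * N / (U + 1)) + 8 * q) := by
        gcongr
    _ ≤ 36 * (N ^ 2 * L ^ 6 * (1 / q + 1 / (U + 1) + q / N)) := by
        have hpos : 0 ≤ N * L ^ 6 * (32 * (N / q) + 2 * (N / (U + 1)) + 28 * q : ℝ) := by
          positivity
        refine le_of_sub_nonneg (hpos.trans_eq ?_)
        field_simp
        ring
    _ = _ := by rw [mul_pow, mul_pow, mul_pow, Real.sq_sqrt (by positivity)]; ring

lemma norm_typeII_le (h : IsDirichletApprox α a q) (hqN : q ≤ N)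
    (hf : ∀ u ≤ N, ‖f u‖ ≤ 1 + Real.log N) (hf_zero : ∀ u ≤ U, f u = 0)
    (hg : ∀ n, ‖g n‖ ≤ #n.divisors) (hg_zero : ∀ n ≤ U, g n = 0) :
    ‖∑ u ∈ Ioc 0 N, f u * ∑ n ∈ Ioc 0 (N / u), g n * eexp (α * (u * n : ℕ))‖
      ≤ 12 * (N * (1 + Real.log N) ^ 4 * √(1 / q + 1 / (U + 1) + q / N)) := by
  calc _ ≤ _ := norm_sum_Ioc_le_of_dyadic (by have := h.one_le; omega) fun X hX _ =>
        h.norm_typeII_block_le hqN hf hf_zero hg hg_zero hX le_rfl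
    _ ≤ 2 * (1 + Real.log N)
          * (6 * (N * (1 + Real.log N) ^ 3 * √(1 / q + 1 / (U + 1) + q / N))) := by
        gcongr
        exact natLog_two_add_one_le N
    _ = _ := by ring

end IsDirichletApprox

/-! ### Type I sums -/

namespace IsDirichletApprox

variable {α : ℝ} {a : ℤ} {q N K : ℕ} {c : ℕ → ℝ} {C : ℝ}

lemma sum_Ioc_le_mul_log (h : IsDirichletApprox α a q) (hqN : q ≤ N) (hKN : K ≤ N) {F : ℕ → ℝ}
    (hF_zero : F 0 = 0) (hF₀ : ∀ k, 0 ≤ F k) (hF : ∀ k, F k * k ≤ N)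
    (hFn : ∀ k : ℕ, F k * ‖((α * k : ℝ) : UnitAddCircle)‖ ≤ 1) :
    ∑ k ∈ Ioc 0 K, F k ≤ 16 * ((1 + Real.log N) * (q + K + N / q)) := by
  have hlogK : Real.log K ≤ Real.log N := monotone_log_natCast hKN
  calc ∑ k ∈ Ioc 0 K, F k
      ≤ 4 * q + 4 * N / q * (1 + Real.log K) + (8 * K + 4 * q) * (1 + Real.log (2 * q)) :=
        h.sum_Ioc_le_of_mul_le N.cast_nonneg hF_zero hF₀ hF hFn K
    _ ≤ 4 * q + 4 * N / q * (1 + Real.log N) + (8 * K + 4 * q) * (2 * (1 + Real.log N)) := by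
        gcongr
        exact one_add_log_two_mul_le h.one_le hqN
    _ ≤ 16 * ((1 + Real.log N) * (q + K + N / q)) := by
        have hpos : 0 ≤ 4 * q + 8 * (q * Real.log N) + 12 * (N / q * (1 + Real.log N)) := by
          positivity
        exact le_of_sub_nonneg (hpos.trans_eq (by ring))

lemma norm_sum_smul_le {E : Type*} [NormedAddCommGroup E] [NormedSpace ℝ E]
    (h : IsDirichletApprox α a q) (hqN : q ≤ N) (hKN : K ≤ N) (hc : ∀ u ≤ N, |c u| ≤ C)
    (hc_zero : ∀ u, K < u → c u = 0) {T : ℕ → E} {A : ℝ} (hA : 0 < A) (hT_zero : T 0 = 0)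
    (hT : ∀ u, ‖T u‖ * u ≤ A * N)
    (hTn : ∀ u : ℕ, ‖T u‖ * ‖((α * u : ℝ) : UnitAddCircle)‖ ≤ A) :
    ‖∑ u ∈ Ioc 0 N, c u • T u‖ ≤ 16 * (A * C * (1 + Real.log N) * (q + K + N / q)) := by
  have hC : 0 ≤ C := (abs_nonneg _).trans (hc 0 N.zero_le)
  calc ‖∑ u ∈ Ioc 0 N, c u • T u‖ = ‖∑ u ∈ Ioc 0 K, c u • T u‖ := by
        rw [← sum_subset (Ioc_subset_Ioc_right hKN) fun u hu huK => ?_]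
        rw [hc_zero u (by grind), zero_smul]
    _ ≤ ∑ u ∈ Ioc 0 K, A * C * (‖T u‖ / A) := by
        refine norm_sum_le_of_le _ fun u hu => ?_
        rw [norm_smul, mul_comm A, mul_assoc, mul_div_cancel₀ _ hA.ne']
        gcongr
        exact hc u ((mem_Ioc.1 hu).2.trans hKN)
    _ ≤ A * C * (16 * ((1 + Real.log N) * (q + K + N / q))) := by
        rw [← mul_sum]
        gcongr
        refine h.sum_Ioc_le_mul_log hqN hKN (by simp [hT_zero]) (fun u => by positivity)
          (fun u => ?_) fun u => ?_
        · rw [div_mul_eq_mul_div, div_le_iff₀' hA]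
          exact hT u
        · rw [div_mul_eq_mul_div, div_le_one hA]
          exact hTn u
    _ = _ := by ring

lemma norm_typeI_le (h : IsDirichletApprox α a q) (hqN : q ≤ N) (hKN : K ≤ N)
    (hc : ∀ u ≤ N, |c u| ≤ C) (hc_zero : ∀ u, K < u → c u = 0) :
    ‖∑ u ∈ Ioc 0 N, c u • ∑ m ∈ Ioc 0 (N / u), eexp (α * (u * m : ℕ))‖
      ≤ 16 * (C * (1 + Real.log N) * (q + K + N / q)) := by
  simp_rw [Nat.cast_mul, ← mul_assoc]
  refine (h.norm_sum_smul_le hqN hKN hc hc_zero one_pos (by simp) (fun u => ?_)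
    fun u => ?_).trans_eq (by ring)
  · calc _ ≤ ((N / u : ℕ) * u : ℝ) := by
          gcongr
          simpa using norm_sum_eexp_le_card (α * u) (Ioc 0 (N / u))
      _ ≤ 1 * N := by
          rw [one_mul]
          exact_mod_cast Nat.div_mul_le_self N u
  · exact norm_sum_eexp_mul_norm_le (α * u) 1 (N / u + 1)

lemma norm_typeI_log_le (h : IsDirichletApprox α a q) (hqN : q ≤ N) (hKN : K ≤ N)
    (hc : ∀ u ≤ N, |c u| ≤ C) (hc_zero : ∀ u, K < u → c u = 0) :
    ‖∑ u ∈ Ioc 0 N, c u • ∑ m ∈ Ioc 0 (N / u), Real.log m • eexp (α * (u * m : ℕ))‖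
      ≤ 16 * (C * (1 + Real.log N) ^ 2 * (q + K + N / q)) := by
  have hlog (u : ℕ) : Real.log (N / u : ℕ) ≤ 1 + Real.log N := by
    have : Real.log (N / u : ℕ) ≤ Real.log N := monotone_log_natCast (Nat.div_le_self N u)
    linarith
  have hL : 0 < 1 + Real.log N := by positivity
  simp_rw [Nat.cast_mul, ← mul_assoc]
  refine (h.norm_sum_smul_le hqN hKN hc hc_zero hL (by simp) (fun u => ?_)
    fun u => (norm_sum_log_smul_eexp_mul_norm_le _ _).trans (hlog u)).trans_eq (by ring)
  calc _ ≤ Real.log (N / u : ℕ) * (N / u : ℕ) * u := by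
        gcongr
        exact norm_sum_log_smul_eexp_le _ _
    _ ≤ (1 + Real.log N) * ((N / u : ℕ) * u) := by
        rw [mul_assoc]
        gcongr
        exact hlog u
    _ ≤ (1 + Real.log N) * N := by
        gcongr
        exact_mod_cast Nat.div_mul_le_self N u

end IsDirichletApprox

/-! ### Vaughan's identity -/

section Vaughan

open ArithmeticFunction ArithmeticFunction.Moebius ArithmeticFunction.zeta

variable {R : Type*}

/-- The truncation of an arithmetic function to the arguments `n ≤ U`. -/
def lowPart [Zero R] (U : ℕ) (f : ArithmeticFunction R) : ArithmeticFunction R :=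
  ⟨fun n => if n ≤ U then f n else 0, by simp⟩

/-- The truncation of an arithmetic function to the arguments `n > U`. -/
def highPart [Zero R] (U : ℕ) (f : ArithmeticFunction R) : ArithmeticFunction R :=
  ⟨fun n => if n ≤ U then 0 else f n, by simp⟩

lemma lowPart_apply [Zero R] (U : ℕ) (f : ArithmeticFunction R) (n : ℕ) :
    lowPart U f n = if n ≤ U then f n else 0 := rfl

lemma highPart_apply [Zero R] (U : ℕ) (f : ArithmeticFunction R) (n : ℕ) :
    highPart U f n = if n ≤ U then 0 else f n := rfl

lemma lowPart_add_highPart [AddMonoid R] (U : ℕ) (f : ArithmeticFunction R) :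
    lowPart U f + highPart U f = f := by
  ext n
  rw [ArithmeticFunction.add_apply, lowPart_apply, highPart_apply]
  split_ifs <;> simp

lemma abs_lowPart_le (U : ℕ) (f : ArithmeticFunction ℝ) (n : ℕ) : |lowPart U f n| ≤ |f n| := by
  rw [lowPart_apply]
  split_ifs <;> simp

lemma abs_highPart_le (U : ℕ) (f : ArithmeticFunction ℝ) (n : ℕ) : |highPart U f n| ≤ |f n| := by
  rw [highPart_apply]
  split_ifs <;> simp

lemma lowPart_eq_zero [Zero R] {U n : ℕ} (f : ArithmeticFunction R) (hn : U < n) :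
    lowPart U f n = 0 := if_neg hn.not_ge

lemma highPart_eq_zero [Zero R] {U n : ℕ} (f : ArithmeticFunction R) (hn : n ≤ U) :
    highPart U f n = 0 := if_pos hn

lemma lowPart_mul_lowPart_eq_zero [Semiring R] {U V n : ℕ} (f g : ArithmeticFunction R)
    (hn : U * V < n) : (lowPart U f * lowPart V g) n = 0 := by
  rw [mul_apply]
  refine sum_eq_zero fun x hx => ?_
  rcases lt_or_ge U x.1 with h₁ | h₁
  · rw [lowPart_eq_zero f h₁, zero_mul]
  rcases lt_or_ge V x.2 with h₂ | h₂
  · rw [lowPart_eq_zero g h₂, mul_zero]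
  rw [← (Nat.mem_divisorsAntidiagonal.1 hx).1] at hn
  exact absurd (Nat.mul_le_mul h₁ h₂) hn.not_ge

lemma highPart_mul_eq_zero [Semiring R] {U n : ℕ} (f g : ArithmeticFunction R) (hn : n ≤ U) :
    (highPart U f * g) n = 0 := by
  rw [mul_apply]
  refine sum_eq_zero fun x hx => ?_
  rw [highPart_eq_zero f ((Nat.divisor_le (Nat.fst_mem_divisors_of_mem_antidiagonal hx)).trans hn),
    zero_mul]

lemma abs_mul_apply_le {f g F G : ArithmeticFunction ℝ} (hf : ∀ n, n ≠ 0 → |f n| ≤ F n)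
    (hg : ∀ n, n ≠ 0 → |g n| ≤ G n) (n : ℕ) : |(f * g) n| ≤ (F * G) n := by
  rw [mul_apply, mul_apply]
  refine (abs_sum_le_sum_abs _ _).trans (sum_le_sum fun x hx => ?_)
  have hx₁ := Nat.ne_zero_of_mem_divisorsAntidiagonal hx
  rw [abs_mul]
  exact mul_le_mul (hf _ hx₁.1) (hg _ hx₁.2) (abs_nonneg _) ((abs_nonneg _).trans (hf _ hx₁.1))

lemma abs_moebius_cast_le (n : ℕ) : |(μ : ArithmeticFunction ℝ) n| ≤ 1 := by
  rw [intCoe_apply]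
  exact_mod_cast abs_moebius_le_one

lemma abs_moebius_cast_le_zeta {n : ℕ} (hn : n ≠ 0) :
    |(μ : ArithmeticFunction ℝ) n| ≤ (ζ : ArithmeticFunction ℝ) n := by
  simpa [natCoe_apply, zeta_apply_ne hn] using abs_moebius_cast_le n

lemma vonMangoldt_eq_vaughan (U V : ℕ) :
    Λ = lowPart V Λ + lowPart U (μ : ArithmeticFunction ℝ) * log
      - lowPart U (μ : ArithmeticFunction ℝ) * lowPart V Λ * ζ
      + highPart V Λ * (highPart U (μ : ArithmeticFunction ℝ) * ζ) := by
  have hμζ : (μ * ζ : ArithmeticFunction ℝ) = 1 := coe_moebius_mul_coe_zeta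
  rw [← lowPart_add_highPart U (μ : ArithmeticFunction ℝ)] at hμζ
  linear_combination (-1 + lowPart U (μ : ArithmeticFunction ℝ) * ζ) * lowPart_add_highPart V Λ
    + lowPart U (μ : ArithmeticFunction ℝ) * vonMangoldt_mul_zeta - highPart V Λ * hμζ

lemma abs_highPart_moebius_mul_zeta_le (U n : ℕ) :
    |(highPart U (μ : ArithmeticFunction ℝ) * (ζ : ArithmeticFunction ℝ)) n| ≤ #n.divisors := by
  rw [coe_mul_zeta_apply]
  refine (abs_sum_le_sum_abs _ _).trans ((sum_le_card_nsmul _ _ 1 fun k _ => ?_).trans_eq ?_)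
  · exact (abs_highPart_le U _ k).trans (abs_moebius_cast_le k)
  · rw [nsmul_one]

lemma abs_lowPart_moebius_mul_lowPart_vonMangoldt_le (U V n : ℕ) :
    |(lowPart U (μ : ArithmeticFunction ℝ) * lowPart V Λ) n| ≤ Real.log n := by
  refine (abs_mul_apply_le (F := ζ) (G := Λ)
    (fun k hk => (abs_lowPart_le U _ k).trans (abs_moebius_cast_le_zeta hk))
    (fun k _ => (abs_lowPart_le V Λ k).trans_eq (abs_of_nonneg vonMangoldt_nonneg)) n).trans_eq ?_
  rw [zeta_mul_vonMangoldt, log_apply]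

end Vaughan

/-! ### The exponential sum over the von Mangoldt function -/

section VonMangoldtSum

open ArithmeticFunction ArithmeticFunction.Moebius ArithmeticFunction.zeta

lemma norm_sum_smul_eexp_le_of_vaughan (U N : ℕ) (α : ℝ) :
    ‖∑ n ∈ Ioc 0 N, Λ n • eexp (α * n)‖
      ≤ ‖∑ n ∈ Ioc 0 N, lowPart U Λ n • eexp (α * n)‖
        + ‖∑ u ∈ Ioc 0 N, lowPart U (μ : ArithmeticFunction ℝ) u
            • ∑ m ∈ Ioc 0 (N / u), Real.log m • eexp (α * (u * m : ℕ))‖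
        + ‖∑ u ∈ Ioc 0 N, (lowPart U (μ : ArithmeticFunction ℝ) * lowPart U Λ) u
            • ∑ m ∈ Ioc 0 (N / u), eexp (α * (u * m : ℕ))‖
        + ‖∑ u ∈ Ioc 0 N, ((highPart U Λ u : ℝ) : ℂ) * ∑ n ∈ Ioc 0 (N / u),
            ((highPart U (μ : ArithmeticFunction ℝ) * (ζ : ArithmeticFunction ℝ)) n : ℂ)
              * eexp (α * (u * n : ℕ))‖ := by
  have hζ (u : ℕ) : ∑ m ∈ Ioc 0 (N / u), (ζ : ArithmeticFunction ℝ) m • eexp (α * (u * m : ℕ))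
      = ∑ m ∈ Ioc 0 (N / u), eexp (α * (u * m : ℕ)) := sum_congr rfl fun m hm => by
    rw [natCoe_apply, zeta_apply_ne (mem_Ioc.1 hm).1.ne', Nat.cast_one, one_smul]
  have hsum (f : ArithmeticFunction ℝ) (g : ArithmeticFunction ℝ) :=
    sum_mul_smul_eq_sum_sum f g (fun n => eexp (α * n)) N
  nth_rw 1 [vonMangoldt_eq_vaughan U U]
  simp_rw [sub_eq_add_neg, ArithmeticFunction.add_apply, ArithmeticFunction.neg_apply, add_smul,
    neg_smul, sum_add_distrib, sum_neg_distrib, hsum, hζ, log_apply, Complex.real_smul,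
    ← sub_eq_add_neg]
  exact (norm_add_le _ _).trans (by gcongr; exact (norm_sub_le _ _).trans (by
    gcongr; exact norm_add_le _ _))

lemma norm_sum_lowPart_vonMangoldt_smul_le {U N : ℕ} (hUN : U ≤ N) (α : ℝ) :
    ‖∑ n ∈ Ioc 0 N, lowPart U Λ n • eexp (α * n)‖ ≤ U * Real.log N := by
  rw [← sum_subset (Ioc_subset_Ioc_right hUN) fun n hn hnU => by
    rw [lowPart_eq_zero _ (by grind), zero_smul]]
  calc _ ≤ ∑ _n ∈ Ioc 0 U, Real.log N := norm_sum_le_of_le _ fun n hn => by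
        rw [norm_smul, norm_eexp, mul_one]
        calc ‖lowPart U Λ n‖ ≤ |Λ n| := abs_lowPart_le U Λ n
          _ ≤ Real.log n := by
            rw [abs_of_nonneg vonMangoldt_nonneg]
            exact vonMangoldt_le_log
          _ ≤ Real.log N := monotone_log_natCast ((mem_Ioc.1 hn).2.trans hUN)
    _ = U * Real.log N := by simp

namespace IsDirichletApprox

variable {α : ℝ} {a : ℤ} {q N U : ℕ}

lemma norm_vaughan_typeII_le (h : IsDirichletApprox α a q) (hqN : q ≤ N) (U : ℕ) :
    ‖∑ u ∈ Ioc 0 N, ((highPart U Λ u : ℝ) : ℂ) * ∑ n ∈ Ioc 0 (N / u),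
        ((highPart U (μ : ArithmeticFunction ℝ) * (ζ : ArithmeticFunction ℝ)) n : ℂ)
          * eexp (α * (u * n : ℕ))‖
      ≤ 12 * (N * (1 + Real.log N) ^ 4 * √(1 / q + 1 / (U + 1) + q / N)) := by
  refine h.norm_typeII_le hqN (fun u hu => ?_) (fun u hu => ?_) (fun n => ?_) fun n hn => ?_
  · calc ‖(highPart U Λ u : ℂ)‖ = |highPart U Λ u| := Complex.norm_real _
      _ ≤ |Λ u| := abs_highPart_le U Λ u
      _ = Λ u := abs_of_nonneg vonMangoldt_nonneg
      _ ≤ Real.log u := vonMangoldt_le_log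
      _ ≤ Real.log N := monotone_log_natCast hu
      _ ≤ 1 + Real.log N := (lt_one_add _).le
  · rw [highPart_eq_zero _ hu, Complex.ofReal_zero]
  · rw [Complex.norm_real]
    exact abs_highPart_moebius_mul_zeta_le U n
  · rw [highPart_mul_eq_zero _ _ hn, Complex.ofReal_zero]

lemma norm_sum_vonMangoldt_smul_le_of_sq_le (h : IsDirichletApprox α a q) (hqN : q ≤ N)
    (hUN : U ^ 2 ≤ N) :
    ‖∑ n ∈ Ioc 0 N, Λ n • eexp (α * n)‖ ≤ (1 + Real.log N) ^ 4
      * (33 * (q + U ^ 2 + N / q) + 12 * (N * √(1 / q + 1 / (U + 1) + q / N))) := by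
  have hU : U ≤ U ^ 2 := Nat.le_self_pow two_ne_zero U
  have hU' : (U : ℝ) ≤ U ^ 2 := mod_cast hU
  have hlow := norm_sum_lowPart_vonMangoldt_smul_le (hU.trans hUN) α
  have hI_log := h.norm_typeI_log_le hqN (hU.trans hUN)
    (fun u _ => (abs_lowPart_le U _ u).trans (abs_moebius_cast_le u)) fun u => lowPart_eq_zero _
  have hI := h.norm_typeI_le hqN hUN
    (fun u hu => (abs_lowPart_moebius_mul_lowPart_vonMangoldt_le U U u).trans
      (monotone_log_natCast hu))
    fun u hu => lowPart_mul_lowPart_eq_zero _ _ (by rwa [← sq])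
  have hII := h.norm_vaughan_typeII_le hqN U
  set T : ℝ := q + U ^ 2 + N / q with hT
  set L := 1 + Real.log N
  have hL : 1 ≤ L := le_add_of_nonneg_right (Real.log_natCast_nonneg N)
  have hlogL : Real.log N ≤ L := (lt_one_add _).le
  have hUT : U ≤ T := by
    have hNq : (0 : ℝ) ≤ q + N / q := by positivity
    linarith
  calc _ ≤ _ := norm_sum_smul_eexp_le_of_vaughan U N α
    _ ≤ T * L + 16 * (L ^ 2 * T) + 16 * (L * L * T)
        + 12 * (N * L ^ 4 * √(1 / q + 1 / (U + 1) + q / N)) := by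
      refine add_le_add (add_le_add (add_le_add ?_ ?_) ?_) hII
      · exact hlow.trans (by gcongr)
      · exact hI_log.trans (by rw [one_mul, hT]; gcongr)
      · exact hI.trans (by push_cast; gcongr)
    _ ≤ T * L ^ 4 + 16 * (L ^ 4 * T) + 16 * (L ^ 4 * T)
        + 12 * (N * L ^ 4 * √(1 / q + 1 / (U + 1) + q / N)) := by
      rw [← sq]
      gcongr
      · exact le_self_pow₀ hL four_ne_zero
      all_goals norm_num
    _ = _ := by ring

end IsDirichletApprox

end VonMangoldtSum

/-! ### Optimization of the truncation parameter -/

/-- The arithmetic factor `N / √q + N ^ (4 / 5) + √(q * N)` of Vaughan's bound, that is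
`N * (q ^ (-1 / 2) + N ^ (-1 / 5) + q ^ (1 / 2) * N ^ (-1 / 2))` in a form which is visibly
monotone in `N`. -/
noncomputable def vaughanBound (N q : ℕ) : ℝ := N / √q + (N : ℝ) ^ (4 / 5 : ℝ) + √(q * N)

lemma vaughanBound_nonneg (N q : ℕ) : 0 ≤ vaughanBound N q := by
  unfold vaughanBound
  positivity

lemma monotone_vaughanBound (q : ℕ) : Monotone fun N => vaughanBound N q := fun M N hMN => by
  simp only [vaughanBound]
  gcongr

lemma sqrt_mul_le_vaughanBound (N q : ℕ) : √(q * N) ≤ vaughanBound N q :=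
  le_add_of_nonneg_left (by positivity)

lemma floor_rpow_two_fifths_sq_le (N : ℕ) :
    (⌊(N : ℝ) ^ (2 / 5 : ℝ)⌋₊ : ℝ) ^ 2 ≤ (N : ℝ) ^ (4 / 5 : ℝ) := by
  calc _ ≤ ((N : ℝ) ^ (2 / 5 : ℝ)) ^ 2 := by
        gcongr
        exact Nat.floor_le (by positivity)
    _ = (N : ℝ) ^ (4 / 5 : ℝ) := by
        rw [← Real.rpow_mul_natCast N.cast_nonneg]
        norm_num

lemma add_floor_sq_add_div_le_vaughanBound {N q : ℕ} (hq : 1 ≤ q) (hqN : q ≤ N) :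
    q + (⌊(N : ℝ) ^ (2 / 5 : ℝ)⌋₊ : ℝ) ^ 2 + N / q ≤ vaughanBound N q := by
  have hq' : (1 : ℝ) ≤ q := mod_cast hq
  have hqN' : (q : ℝ) ≤ N := mod_cast hqN
  have hfloor := floor_rpow_two_fifths_sq_le N
  have hq_le : (q : ℝ) ≤ √(q * N) := Real.le_sqrt_of_sq_le (by rw [sq]; gcongr)
  have hdiv : (N : ℝ) / q ≤ N / √q :=
    div_le_div_of_nonneg_left N.cast_nonneg (by positivity)
      ((Real.sqrt_le_left (by positivity)).2 (le_self_pow₀ hq' two_ne_zero))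
  unfold vaughanBound
  linarith

lemma mul_sqrt_le_vaughanBound {N : ℕ} (hN : 1 ≤ N) (q : ℕ) :
    N * √(1 / q + 1 / (⌊(N : ℝ) ^ (2 / 5 : ℝ)⌋₊ + 1) + q / N) ≤ vaughanBound N q := by
  have hN' : (0 : ℝ) < N := by positivity
  have hfloor : 1 / (⌊(N : ℝ) ^ (2 / 5 : ℝ)⌋₊ + 1 : ℝ) ≤ 1 / (N : ℝ) ^ (2 / 5 : ℝ) := by
    gcongr
    exact (Nat.lt_floor_add_one _).le
  have hsq₁ : (N / √q) ^ 2 = (N : ℝ) ^ 2 * (1 / q) := by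
    rw [div_pow, Real.sq_sqrt q.cast_nonneg, mul_one_div]
  have hsq₂ : ((N : ℝ) ^ (4 / 5 : ℝ)) ^ 2 = (N : ℝ) ^ 2 * (1 / (N : ℝ) ^ (2 / 5 : ℝ)) := by
    rw [← Real.rpow_mul_natCast hN'.le, mul_one_div, ← Real.rpow_natCast,
      ← Real.rpow_sub hN']
    norm_num
  have hsq₃ : √(q * N) ^ 2 = (N : ℝ) ^ 2 * (q / N) := by
    rw [Real.sq_sqrt (by positivity)]
    field_simp
  refine le_of_sq_le_sq ?_ (vaughanBound_nonneg N q)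
  calc _ = (N : ℝ) ^ 2 * (1 / q + 1 / (⌊(N : ℝ) ^ (2 / 5 : ℝ)⌋₊ + 1) + q / N) := by
        rw [mul_pow, Real.sq_sqrt (by positivity)]
    _ ≤ (N : ℝ) ^ 2 * (1 / q + 1 / (N : ℝ) ^ (2 / 5 : ℝ) + q / N) := by gcongr
    _ = (N / √q) ^ 2 + ((N : ℝ) ^ (4 / 5 : ℝ)) ^ 2 + √(q * N) ^ 2 := by
        rw [hsq₁, hsq₂, hsq₃]
        ring
    _ ≤ vaughanBound N q ^ 2 := by
        have hpos : 0 ≤ N / √q * (N : ℝ) ^ (4 / 5 : ℝ) + N / √q * √(q * N)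
            + (N : ℝ) ^ (4 / 5 : ℝ) * √(q * N) := by positivity
        unfold vaughanBound
        linarith only [hpos]

open ArithmeticFunction in
lemma norm_sum_vonMangoldt_smul_le_mul_log (α : ℝ) (N : ℕ) :
    ‖∑ n ∈ Ioc 0 N, Λ n • eexp (α * n)‖ ≤ N * Real.log N := by
  calc _ ≤ ∑ _n ∈ Ioc 0 N, Real.log N := norm_sum_le_of_le _ fun n hn => by
        rw [norm_smul, norm_eexp, mul_one, Real.norm_of_nonneg vonMangoldt_nonneg]
        exact vonMangoldt_le_log.trans (monotone_log_natCast (mem_Ioc.1 hn).2)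
    _ = N * Real.log N := by simp

namespace IsDirichletApprox

variable {α : ℝ} {a : ℤ} {q : ℕ}

open ArithmeticFunction in
lemma norm_sum_vonMangoldt_smul_le (h : IsDirichletApprox α a q) (N : ℕ) :
    ‖∑ n ∈ Ioc 0 N, Λ n • eexp (α * n)‖ ≤ 45 * ((1 + Real.log N) ^ 4 * vaughanBound N q) := by
  set L := 1 + Real.log N
  have hL : 1 ≤ L := le_add_of_nonneg_right (Real.log_natCast_nonneg N)
  have hB := vaughanBound_nonneg N q
  rcases le_or_gt q N with hqN | hqN
  · have hN : 1 ≤ N := h.one_le.trans hqN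
    have hU : (⌊(N : ℝ) ^ (2 / 5 : ℝ)⌋₊ : ℝ) ^ 2 ≤ N :=
      (floor_rpow_two_fifths_sq_le N).trans
        (Real.rpow_le_self_of_one_le (mod_cast hN) (by norm_num))
    calc _ ≤ _ := h.norm_sum_vonMangoldt_smul_le_of_sq_le hqN (mod_cast hU)
      _ ≤ L ^ 4 * (33 * vaughanBound N q + 12 * vaughanBound N q) := by
        gcongr
        · exact add_floor_sq_add_div_le_vaughanBound h.one_le hqN
        · exact mul_sqrt_le_vaughanBound hN q
      _ = _ := by ring
  · have hN : (N : ℝ) ≤ √(q * N) := Real.le_sqrt_of_sq_le (by rw [sq]; gcongr)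
    calc _ ≤ N * Real.log N := norm_sum_vonMangoldt_smul_le_mul_log α N
      _ ≤ vaughanBound N q * L ^ 4 := by
        gcongr
        · exact hN.trans (sqrt_mul_le_vaughanBound N q)
        · exact (lt_one_add _).le.trans (le_self_pow₀ hL four_ne_zero)
      _ ≤ _ := by linarith [mul_nonneg hB (by positivity : 0 ≤ L ^ 4)]

end IsDirichletApprox

/-! ### From prime powers to primes -/

open ArithmeticFunction in
lemma norm_sum_primes_log_smul_sub_vonMangoldt_le (α : ℝ) {N : ℕ} (hN : 1 ≤ N) :
    ‖∑ p ∈ Ioc 0 N with p.Prime, Real.log p • eexp (α * p)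
        - ∑ n ∈ Ioc 0 N, Λ n • eexp (α * n)‖ ≤ 2 * √N * Real.log N := by
  have hprime : ∑ p ∈ Ioc 0 N with p.Prime, Real.log p • eexp (α * p)
      = ∑ p ∈ Ioc 0 N with p.Prime, Λ p • eexp (α * p) :=
    sum_congr rfl fun p hp => by rw [vonMangoldt_apply_prime (mem_filter.1 hp).2]
  rw [hprime, ← sum_filter_add_sum_filter_not (Ioc 0 N) Nat.Prime, sub_add_cancel_left, norm_neg]
  calc ‖∑ n ∈ Ioc 0 N with ¬n.Prime, Λ n • eexp (α * n)‖
      ≤ ∑ n ∈ Ioc 0 N with ¬n.Prime, Λ n := norm_sum_le_of_le _ fun n _ => by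
        rw [norm_smul, norm_eexp, mul_one, Real.norm_of_nonneg vonMangoldt_nonneg]
    _ = Chebyshev.psi N - Chebyshev.theta N := by
        rw [Chebyshev.psi_sub_theta_eq_sum_not_prime, Nat.floor_natCast]
    _ ≤ 2 * √N * Real.log N := Chebyshev.psi_sub_theta_le (mod_cast hN)

/-- Writing `max i 2` in the weight makes it antitone on all of `ℕ`, as Abel summation needs. -/
lemma S₁_eq_sum_smul (N : ℕ) (α : ℝ) :
    S₁ N α = ∑ i ∈ range (N + 1), (Real.log (max i 2 : ℕ))⁻¹
      • if i.Prime then Real.log i • eexp (α * i) else 0 := by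
  rw [S₁, sum_filter]
  refine sum_congr rfl fun i _ => ?_
  split_ifs with hi
  · have hlog : Real.log i ≠ 0 := (Real.log_pos (mod_cast hi.one_lt)).ne'
    rw [max_eq_left hi.two_le, inv_smul_smul₀ hlog]
  · rw [smul_zero]

lemma norm_S₁_le_of_forall_le {N : ℕ} {α B : ℝ}
    (hB : ∀ M ≤ N, ‖∑ p ∈ Ioc 0 M with p.Prime, Real.log p • eexp (α * p)‖ ≤ B) :
    ‖S₁ N α‖ ≤ 2 * B := by
  have hB₀ : 0 ≤ B := (norm_nonneg _).trans (hB 0 N.zero_le)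
  have hweight : Antitone fun i : ℕ => (Real.log (max i 2 : ℕ))⁻¹ := fun i j hij =>
    inv_anti₀ (Real.log_pos (mod_cast lt_max_of_lt_right one_lt_two))
      (monotone_log_natCast (max_le_max_right 2 hij))
  rw [S₁_eq_sum_smul]
  calc _ ≤ (Real.log (max 0 2 : ℕ))⁻¹ * B := by
        refine norm_sum_range_smul_le_of_antitone hweight
          (fun i => inv_nonneg.2 (Real.log_natCast_nonneg _)) (N + 1) fun m hm => ?_
        rcases m with - | M
        · simpa using hB₀
        rw [← sum_filter]
        convert! hB M (by omega) using 3
        ext p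
        simp only [mem_filter, mem_range, mem_Ioc]
        exact and_congr_left fun hp => by have := hp.pos; omega
    _ ≤ 2 * B := by
        gcongr
        rw [Nat.zero_max, Nat.cast_two, inv_le_comm₀ (by positivity) two_pos]
        linarith [Real.log_two_gt_d9]

namespace IsDirichletApprox

variable {α : ℝ} {a : ℤ} {q : ℕ}

lemma norm_sum_primes_log_smul_le (h : IsDirichletApprox α a q) (N : ℕ) :
    ‖∑ p ∈ Ioc 0 N with p.Prime, Real.log p • eexp (α * p)‖
      ≤ 47 * ((1 + Real.log N) ^ 4 * vaughanBound N q) := by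
  have hB := vaughanBound_nonneg N q
  rcases Nat.eq_zero_or_pos N with rfl | hN
  · simpa using hB
  set L := 1 + Real.log N
  have hL : 1 ≤ L := le_add_of_nonneg_right (Real.log_natCast_nonneg N)
  have hq : (1 : ℝ) ≤ q := mod_cast h.one_le
  have hsqrt : √N ≤ √(q * N) := Real.sqrt_le_sqrt (le_mul_of_one_le_left N.cast_nonneg hq)
  calc _ ≤ ‖∑ n ∈ Ioc 0 N, ArithmeticFunction.vonMangoldt n • eexp (α * n)‖
        + 2 * √N * Real.log N :=
        (norm_le_norm_add_norm_sub' _ _).trans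
          (by gcongr; exact norm_sum_primes_log_smul_sub_vonMangoldt_le α hN)
    _ ≤ 45 * (L ^ 4 * vaughanBound N q) + 2 * vaughanBound N q * L ^ 4 := by
        gcongr
        · exact h.norm_sum_vonMangoldt_smul_le N
        · exact hsqrt.trans (sqrt_mul_le_vaughanBound N q)
        · exact (lt_one_add _).le.trans (le_self_pow₀ hL four_ne_zero)
    _ = _ := by ring

lemma norm_S₁_le (h : IsDirichletApprox α a q) (N : ℕ) :
    ‖S₁ N α‖ ≤ 94 * ((1 + Real.log N) ^ 4 * vaughanBound N q) := by
  have hbound : ∀ M ≤ N, ‖∑ p ∈ Ioc 0 M with p.Prime, Real.log p • eexp (α * p)‖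
      ≤ 47 * ((1 + Real.log N) ^ 4 * vaughanBound N q) := fun M hM => by
    have hB₀ := vaughanBound_nonneg M q
    have hB : vaughanBound M q ≤ vaughanBound N q := monotone_vaughanBound q hM
    have hlog : Real.log M ≤ Real.log N := monotone_log_natCast hM
    exact (h.norm_sum_primes_log_smul_le M).trans (by gcongr _ * ((1 + ?_) ^ 4 * ?_))
  linarith [norm_S₁_le_of_forall_le hbound]

end IsDirichletApprox

lemma mul_rpow_add_rpow_add_rpow_eq_vaughanBound {N q : ℕ} (hN : 0 < N) (hq : 0 < q) :
    N * ((q : ℝ) ^ (-(1 : ℝ) / 2) + (N : ℝ) ^ (-(1 : ℝ) / 5)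
      + (q : ℝ) ^ ((1 : ℝ) / 2) * (N : ℝ) ^ (-(1 : ℝ) / 2)) = vaughanBound N q := by
  have hN' : (0 : ℝ) < N := mod_cast hN
  have hq' : (0 : ℝ) < q := mod_cast hq
  have hpow (s : ℝ) : (N : ℝ) * (N : ℝ) ^ s = (N : ℝ) ^ (1 + s) := by
    rw [Real.rpow_add hN', Real.rpow_one]
  rw [mul_add, mul_add, mul_left_comm, hpow, hpow, vaughanBound, Real.sqrt_mul q.cast_nonneg,
    Real.sqrt_eq_rpow, Real.sqrt_eq_rpow, div_eq_mul_inv (N : ℝ), ← Real.rpow_neg hq'.le]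
  norm_num

end MinorArc

theorem S₁_minor_arc_bound :
    ∃ C > (0 : ℝ), ∀ N : ℕ, 2 ≤ N → ∀ α : ℝ, ∀ a : ℤ, ∀ q : ℕ, 1 ≤ q →
      Int.gcd a q = 1 → |α - (a : ℝ) / (q : ℝ)| ≤ 1 / (q : ℝ) ^ 2 →
      ‖S₁ N α‖ ≤ C * (N : ℝ) * (Real.log N) ^ 4 *
        ((q : ℝ) ^ (-(1 : ℝ) / 2) + (N : ℝ) ^ (-(1 : ℝ) / 5) +
          (q : ℝ) ^ ((1 : ℝ) / 2) * (N : ℝ) ^ (-(1 : ℝ) / 2)) := by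
  refine ⟨7614, by norm_num, fun N hN α a q hq hgcd hα => ?_⟩
  have hlog : 1 + Real.log N ≤ 3 * Real.log N := by
    have : Real.log (2 : ℕ) ≤ Real.log N := MinorArc.monotone_log_natCast hN
    rw [Nat.cast_two] at this
    linarith [Real.log_two_gt_d9]
  calc ‖S₁ N α‖ ≤ 94 * ((1 + Real.log N) ^ 4 * MinorArc.vaughanBound N q) :=
        MinorArc.IsDirichletApprox.norm_S₁_le ⟨hq, hgcd, hα⟩ N
    _ ≤ 94 * ((3 * Real.log N) ^ 4 * MinorArc.vaughanBound N q) := by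
        gcongr
        exact MinorArc.vaughanBound_nonneg N q
    _ = _ := by
        rw [← MinorArc.mul_rpow_add_rpow_add_rpow_eq_vaughanBound (by omega) hq]
        ring
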